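/- For every tree T with positive integer node weights there is a choice of minimizers for the greedy algorithm such that the resulting greedy search tree D satisfies cost(D) ≤ 2·cost(D*) for every search tree D* for T; i.e., the greedy strategy is a 2-approximation for the tree search problem. -/

import Mathlib

/-!
The comparison with an arbitrary search tree is carried by one inequality. Let `V` be a set of
nodes on which the greedy algorithm runs, `x` its greedy choice, and `H`, `L` the heavier and the
lighter of the two parts `V ∩ T_x`, `V ∖ T_x`. Any search strategy for `V` of cost `c` induces
strategies for `H` and for `L` by restriction, of costs `c₁` and `c₂`, and
`c₁ + c₂ + w(H) ≤ c` (`Strategy.split_savings`). Since `2 w(H) ≥ w(V)`, induction on `V` gives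
`cost(greedy) = w(V) + cost(greedy on H) + cost(greedy on L) ≤ w(V) + 2 c₁ + 2 c₂ ≤ 2 c`.

For the inequality, follow the strategy from its root, as long as the current set `S` contains
`L`. By laminarity each query `u` has a constant answer on `H` or on `L`. A query that is constant
on `H` is superfluous for `H`, which saves `w(S ∩ H)`, and this is enough. A query that is not
constant on `H` is superfluous for `L`, which saves `w(L)`; it splits off a proper subset of `H`,
and by minimality of `x` that subset has weight at most `w(L)` (`IsGreedyChoice.cut`), so that
the saving pays for the part of `H` that is lost.

The sets `V` that occur satisfy a weak form of connectivity (`RTree.Conn`): every query that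
splits `V` belongs to `V`. This allows the greedy choice, which ranges over `V`, to be compared
with all queries.
-/

open scoped Classical

/-- Ordered binary trees, every node carrying a label (assignment). `nil` is the empty tree. -/
inductive BT (α : Type) where
  | nil : BT α
  | node (a : α) (l r : BT α) : BT α
  deriving DecidableEq

namespace BT

variable {α : Type}

/-- Labels of the leaves (nodes with no children), from left to right. -/
def leafList : BT α → List α
  | .nil => []
  | .node a .nil .nil => [a]
  | .node _ l r => l.leafList ++ r.leafList

/-- Labels of all nodes. -/
def vals : BT α → List α
  | .nil => []
  | .node a l r => a :: (l.vals ++ r.vals)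

/-- Leaf labels together with the depth (number of edges from the root) of the leaf. -/
def leafDepths : BT α → List (α × ℕ)
  | .nil => []
  | .node a .nil .nil => [(a, 0)]
  | .node _ l r => (l.leafDepths ++ r.leafDepths).map (fun p => (p.1, p.2 + 1))

/-- Height of a binary tree, in edges. -/
def height : BT α → ℕ
  | .nil => 0
  | .node _ .nil .nil => 0
  | .node _ l r => max l.height r.height + 1

/-- Label of the root. -/
def rootVal : BT α → Option α
  | .nil => none
  | .node a _ _ => some a

/-- The labels of the nodes on the path from the root to the (leftmost) leaf labelled `x`. -/
def pathTo [DecidableEq α] : BT α → α → List α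
  | .nil, _ => []
  | .node a l r, x => a :: (if x ∈ r.leafList then r.pathTo x else l.pathTo x)

/-- The depth (number of edges) of the leaf labelled `x`. -/
def depthOf [DecidableEq α] (D : BT α) (x : α) : ℕ := (D.pathTo x).length - 1

/-- The search-tree property w.r.t. a descendance relation `desc` (`desc u v` meaning
`v` lies in the subtree of the input tree rooted at `u`): everything in the right subtree
of a node labelled `a` is in the subtree of `a`, everything in the left subtree is not. -/
def SearchProp (desc : α → α → Prop) : BT α → Prop
  | .nil => True
  | .node a l r =>
      (∀ b ∈ r.vals, desc a b) ∧ (∀ b ∈ l.vals, ¬ desc a b) ∧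
        SearchProp desc l ∧ SearchProp desc r

/-- Cost (expected number of queries, unnormalized) of a search tree. -/
def cost (w : α → ℕ) (D : BT α) : ℕ := (D.leafDepths.map (fun p => p.2 * w p.1)).sum

/-- Total weight of the leaves of a search (sub)tree. -/
def leafWeight (w : α → ℕ) (D : BT α) : ℕ := (D.leafList.map w).sum

/-- All subtrees of a binary tree together with their depth. -/
def subtreesD : BT α → List (BT α × ℕ)
  | .nil => []
  | .node a l r =>
      (BT.node a l r, 0) :: (l.subtreesD ++ r.subtreesD).map (fun p => (p.1, p.2 + 1))

end BT

/-- A finite rooted tree, encoded by a parent function on `Fin n`. -/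
structure RTree where
  n : ℕ
  parent : Fin n → Fin n
  root : Fin n
  parent_root : parent root = root
  reach : ∀ v, ∃ k, parent^[k] v = root

namespace RTree

variable (T : RTree)

/-- `T.anc u v` holds iff `u` is a (weak) ancestor of `v`, i.e. `v ∈ T_u`. -/
def anc (u v : Fin T.n) : Prop := ∃ k, T.parent^[k] v = u

/-- The set of nodes of the subtree `T_u` rooted at `u`. -/
noncomputable def subtree (u : Fin T.n) : Finset (Fin T.n) :=
  Finset.univ.filter (fun v => T.anc u v)

/-- Total weight of a set of nodes. -/
def wsum (w : Fin T.n → ℕ) (S : Finset (Fin T.n)) : ℕ := ∑ v ∈ S, w v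

/-- `D` is a search tree for the entire tree `T`. -/
def IsSearchTree (D : BT (Fin T.n)) : Prop :=
  (∀ v : Fin T.n, D.leafList.count v = 1) ∧ BT.SearchProp T.anc D

/-- `D` is a search tree for the subtree (or subforest) of `T` induced by the node set `V'`. -/
def IsSearchTreeOn (V' : Finset (Fin T.n)) (D : BT (Fin T.n)) : Prop :=
  (∀ v : Fin T.n, D.leafList.count v = (if v ∈ V' then 1 else 0)) ∧
    (∀ a ∈ D.vals, a ∈ V') ∧ BT.SearchProp T.anc D

/-- `D` is an optimal (minimum expected cost) search tree for `(T,w)`. -/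
def IsOptimal (w : Fin T.n → ℕ) (D : BT (Fin T.n)) : Prop :=
  T.IsSearchTree D ∧ ∀ D' : BT (Fin T.n), T.IsSearchTree D' → BT.cost w D ≤ BT.cost w D'

/-- Degree of a node of `T` (number of neighbours). -/
noncomputable def degree (v : Fin T.n) : ℕ :=
  (Finset.univ.filter (fun u => T.parent u = v ∧ u ≠ v)).card + (if v = T.root then 0 else 1)

/-- Maximum degree `Δ(T)`. -/
noncomputable def maxDegree : ℕ := Finset.univ.sup T.degree

/-- `y` lies on the (unique) path between `u` and `v` in `T`. -/
def onPath (y u v : Fin T.n) : Prop :=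
  (T.anc y u ∨ T.anc y v) ∧ (∀ z, T.anc z u → T.anc z v → T.anc z y)

end RTree


/-- The greedy algorithm on the part of `T` induced by the node set `V'`:
choose `x ∈ V'` minimizing `|w(V' ∩ T_x) − w(V' ∖ T_x)|`, assign the root of the search
tree to `x`, and recurse on `V' ∩ T_x` (right subtree) and `V' ∖ T_x` (left subtree). -/
inductive IsGreedy (T : RTree) (w : Fin T.n → ℕ) : Finset (Fin T.n) → BT (Fin T.n) → Prop
  | leaf (x : Fin T.n) : IsGreedy T w {x} (BT.node x BT.nil BT.nil)
  | node (V' : Finset (Fin T.n)) (x : Fin T.n) (l r : BT (Fin T.n))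
      (hx : x ∈ V') (hcard : 2 ≤ V'.card)
      (hmin : ∀ y ∈ V',
        |(T.wsum w (V' ∩ T.subtree x) : ℤ) - (T.wsum w (V' \ T.subtree x) : ℤ)| ≤
        |(T.wsum w (V' ∩ T.subtree y) : ℤ) - (T.wsum w (V' \ T.subtree y) : ℤ)|)
      (hr : IsGreedy T w (V' ∩ T.subtree x) r)
      (hl : IsGreedy T w (V' \ T.subtree x) l) :
      IsGreedy T w V' (BT.node x l r)

/-! ### The ancestor relation -/

namespace RTree

variable (T : RTree)

lemma anc_refl (u : Fin T.n) : T.anc u u := ⟨0, rfl⟩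

lemma anc_trans {u v z : Fin T.n} (h : T.anc u v) (h' : T.anc v z) : T.anc u z := by
  obtain ⟨k, rfl⟩ := h
  obtain ⟨m, rfl⟩ := h'
  exact ⟨k + m, Function.iterate_add_apply _ _ _ _⟩

lemma anc_total {u v z : Fin T.n} (h : T.anc u z) (h' : T.anc v z) : T.anc u v ∨ T.anc v u := by
  obtain ⟨k, rfl⟩ := h
  obtain ⟨m, rfl⟩ := h'
  rcases le_total k m with hkm | hkm
  · right
    exact ⟨m - k, by rw [← Function.iterate_add_apply, Nat.sub_add_cancel hkm]⟩
  · left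
    exact ⟨k - m, by rw [← Function.iterate_add_apply, Nat.sub_add_cancel hkm]⟩

/-- A node that lies on a cycle of the parent function is the root, because iterating the parent
function far enough reaches the fixed point `root`. -/
lemma eq_root_of_cycle {v : Fin T.n} {p : ℕ} (hp : 0 < p) (h : T.parent^[p] v = v) :
    v = T.root := by
  obtain ⟨j, hj⟩ := T.reach v
  have h1 : T.parent^[p * j] v = v := by
    rw [Function.iterate_mul]
    exact Function.iterate_fixed h j
  have h2 : T.parent^[(p * j - j) + j] v = T.root := by
    rw [Function.iterate_add_apply, hj]
    exact Function.iterate_fixed T.parent_root _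
  rw [Nat.sub_add_cancel (Nat.le_mul_of_pos_left j hp), h1] at h2
  exact h2

lemma anc_antisymm {u v : Fin T.n} (h : T.anc u v) (h' : T.anc v u) : u = v := by
  obtain ⟨k, hk⟩ := h
  obtain ⟨m, hm⟩ := h'
  rcases Nat.eq_zero_or_pos (m + k) with h0 | h0
  · have : k = 0 := by omega
    subst this
    exact hk.symm
  · have hv : v = T.root := T.eq_root_of_cycle h0 (by rw [Function.iterate_add_apply, hk, hm])
    have hu : u = T.root := T.eq_root_of_cycle (p := k + m) (by omega)
      (by rw [Function.iterate_add_apply, hm, hk])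
    rw [hu, hv]

@[simp] lemma mem_subtree {u v : Fin T.n} : v ∈ T.subtree u ↔ T.anc u v := by
  simp [subtree]

/-- Weak connectivity of a node set `V`: every node `u` whose query splits `V` lies in `V`. -/
def Conn (V : Finset (Fin T.n)) : Prop :=
  ∀ u, ∀ a ∈ V, ∀ b ∈ V, T.anc u a → ¬ T.anc u b → u ∈ V

variable {T}

lemma Conn.inter {V : Finset (Fin T.n)} (h : T.Conn V) (x : Fin T.n) :
    T.Conn (V ∩ T.subtree x) := by
  intro u a ha b hb hua hub
  simp only [Finset.mem_inter, mem_subtree] at *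
  refine ⟨h u a ha.1 b hb.1 hua hub, ?_⟩
  rcases T.anc_total hua ha.2 with h1 | h1
  · exact absurd (T.anc_trans h1 hb.2) hub
  · exact h1

lemma Conn.sdiff {V : Finset (Fin T.n)} (h : T.Conn V) (x : Fin T.n) :
    T.Conn (V \ T.subtree x) := by
  intro u a ha b hb hua hub
  simp only [Finset.mem_sdiff, mem_subtree] at *
  exact ⟨h u a ha.1 b hb.1 hua hub, fun h1 => ha.2 (T.anc_trans h1 hua)⟩

variable (T)

lemma wsum_inter_add_sdiff (w : Fin T.n → ℕ) (S B : Finset (Fin T.n)) :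
    T.wsum w (S ∩ B) + T.wsum w (S \ B) = T.wsum w S :=
  Finset.sum_inter_add_sum_sdiff S B w

lemma wsum_mono (w : Fin T.n → ℕ) {A B : Finset (Fin T.n)} (h : A ⊆ B) :
    T.wsum w A ≤ T.wsum w B :=
  Finset.sum_le_sum_of_subset h

lemma wsum_union (w : Fin T.n → ℕ) {A B : Finset (Fin T.n)} (h : Disjoint A B) :
    T.wsum w (A ∪ B) = T.wsum w A + T.wsum w B :=
  Finset.sum_union h

lemma wsum_pos {w : Fin T.n → ℕ} (hw : ∀ v, 0 < w v) {A : Finset (Fin T.n)} (h : A.Nonempty) :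
    0 < T.wsum w A :=
  Finset.sum_pos (fun v _ => hw v) h

end RTree

/-! ### Search strategies for node sets -/

/-- `Strategy T w S c`: the nodes of `S` can be told apart by queries to subtrees of `T` at total
weighted cost at most `c`. Queries may be made to arbitrary nodes of `T`, and queries that do not
split `S` are permitted (and charged). -/
inductive Strategy (T : RTree) (w : Fin T.n → ℕ) : Finset (Fin T.n) → ℕ → Prop
  | base (S : Finset (Fin T.n)) (c : ℕ) (h : S.card ≤ 1) : Strategy T w S c
  | split (S : Finset (Fin T.n)) (u : Fin T.n) (c₁ c₂ c : ℕ)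
      (h₁ : Strategy T w (S ∩ T.subtree u) c₁) (h₂ : Strategy T w (S \ T.subtree u) c₂)
      (h : T.wsum w S + c₁ + c₂ ≤ c) : Strategy T w S c

namespace Strategy

variable {T : RTree} {w : Fin T.n → ℕ}

lemma mono {S : Finset (Fin T.n)} {c c' : ℕ} (h : Strategy T w S c) (hc : c ≤ c') :
    Strategy T w S c' := by
  cases h with
  | base _ _ h => exact .base _ _ h
  | split _ u c₁ c₂ _ h₁ h₂ h => exact .split _ u c₁ c₂ _ h₁ h₂ (h.trans hc)

/-- A query that is constant on `S` may be skipped. -/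
lemma skip {S : Finset (Fin T.n)} {u : Fin T.n} {c₁ c₂ : ℕ}
    (h₁ : Strategy T w (S ∩ T.subtree u) c₁) (h₂ : Strategy T w (S \ T.subtree u) c₂)
    (h : S ⊆ T.subtree u ∨ Disjoint S (T.subtree u)) : Strategy T w S (c₁ + c₂) := by
  rcases h with h | h
  · rw [Finset.inter_eq_left.2 h] at h₁
    exact h₁.mono (by omega)
  · rw [Finset.sdiff_eq_self_of_disjoint h] at h₂
    exact h₂.mono (by omega)

/-- Restricting a strategy for `S` to two disjoint sets does not increase the total cost. -/
lemma restrict {S : Finset (Fin T.n)} {c : ℕ} (h : Strategy T w S c) (A B : Finset (Fin T.n))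
    (hAB : Disjoint A B) :
    ∃ c₁ c₂, Strategy T w (S ∩ A) c₁ ∧ Strategy T w (S ∩ B) c₂ ∧ c₁ + c₂ ≤ c := by
  induction h with
  | base S c h =>
    exact ⟨0, 0, .base _ _ ((Finset.card_le_card Finset.inter_subset_left).trans h),
      .base _ _ ((Finset.card_le_card Finset.inter_subset_left).trans h), by omega⟩
  | split S u d₁ d₂ c h₁ h₂ h ih₁ ih₂ =>
    obtain ⟨a₁, b₁, ha₁, hb₁, e₁⟩ := ih₁
    obtain ⟨a₂, b₂, ha₂, hb₂, e₂⟩ := ih₂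
    rw [Finset.inter_right_comm] at ha₁ hb₁
    rw [Finset.sdiff_inter_right_comm] at ha₂ hb₂
    refine ⟨_, _, .split _ u _ _ _ ha₁ ha₂ le_rfl, .split _ u _ _ _ hb₁ hb₂ le_rfl, ?_⟩
    have := T.wsum_union w (A := S ∩ A) (B := S ∩ B)
      (hAB.mono Finset.inter_subset_right Finset.inter_subset_right)
    have := T.wsum_mono w (A := S ∩ A ∪ S ∩ B) (B := S)
      (Finset.union_subset Finset.inter_subset_left Finset.inter_subset_left)
    omega

/-- The central inequality. The hypothesis `cut` says that each query either is constant on `H`,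
or is constant on `L` and separates from `L` a part of `H` of weight at most `w(L)`. -/
lemma split_savings {H L : Finset (Fin T.n)} (hd : Disjoint H L) (hL : L.Nonempty)
    (cut : ∀ u, (H ⊆ T.subtree u ∨ Disjoint H (T.subtree u)) ∨
      (L ⊆ T.subtree u ∧ T.wsum w (H \ T.subtree u) ≤ T.wsum w L) ∨
      (Disjoint L (T.subtree u) ∧ T.wsum w (H ∩ T.subtree u) ≤ T.wsum w L))
    {S : Finset (Fin T.n)} {c : ℕ} (h : Strategy T w S c) (hLS : L ⊆ S) (hS : S ⊆ H ∪ L) :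
    ∃ c₁ c₂, Strategy T w (S ∩ H) c₁ ∧ Strategy T w (S ∩ L) c₂ ∧
      c₁ + c₂ + T.wsum w (S ∩ H) ≤ c := by
  induction h with
  | base S c h =>
    -- `S` is the single point of the nonempty set `L`, hence disjoint from `H`
    have hSL : L = S := Finset.eq_of_subset_of_card_le hLS (h.trans hL.card_pos)
    have he : S ∩ H = ∅ := by rw [← hSL]; exact Finset.disjoint_iff_inter_eq_empty.1 hd.symm
    refine ⟨0, 0, .base _ _ (by simp [he]), .base _ _ ?_, by simp [he, RTree.wsum]⟩
    exact (Finset.card_le_card Finset.inter_subset_left).trans h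
  | split S u d₁ d₂ c h₁ h₂ h ih₁ ih₂ =>
    have hw : T.wsum w (S ∩ H) + T.wsum w L = T.wsum w S := by
      rw [← T.wsum_union w (hd.mono_left Finset.inter_subset_right)]
      congr 1
      ext v
      have := @hLS v
      have := @hS v
      simp only [Finset.mem_union, Finset.mem_inter] at *
      tauto
    have hSL : S ∩ L = L := Finset.inter_eq_right.2 hLS
    have hw' := T.wsum_inter_add_sdiff w (S ∩ H) (T.subtree u)
    rcases cut u with hH | ⟨hu, hlt⟩ | ⟨hu, hlt⟩
    · obtain ⟨a₁, b₁, ha₁, hb₁, e₁⟩ := h₁.restrict H L hd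
      obtain ⟨a₂, b₂, ha₂, hb₂, e₂⟩ := h₂.restrict H L hd
      rw [Finset.inter_right_comm] at ha₁ hb₁
      rw [Finset.sdiff_inter_right_comm] at ha₂ hb₂
      refine ⟨_, _, skip ha₁ ha₂ ?_, .split _ u _ _ _ hb₁ hb₂ le_rfl, ?_⟩
      · exact hH.imp Finset.inter_subset_right.trans
          (fun h => h.mono_left Finset.inter_subset_right)
      · rw [hSL]; omega
    · obtain ⟨a₁, b₁, ha₁, hb₁, e₁⟩ :=
        ih₁ (Finset.subset_inter hLS hu) (Finset.inter_subset_left.trans hS)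
      obtain ⟨a₂, b₂, ha₂, hb₂, e₂⟩ := h₂.restrict H L hd
      rw [Finset.inter_right_comm] at ha₁ hb₁ e₁
      rw [Finset.sdiff_inter_right_comm] at ha₂ hb₂
      refine ⟨_, _, .split _ u _ _ _ ha₁ ha₂ le_rfl, skip hb₁ hb₂ ?_, ?_⟩
      · exact Or.inl (by rwa [hSL])
      · have := T.wsum_mono w (A := (S ∩ H) \ T.subtree u) (B := H \ T.subtree u)
          (Finset.sdiff_subset_sdiff Finset.inter_subset_right le_rfl)
        omega
    · obtain ⟨a₂, b₂, ha₂, hb₂, e₂⟩ :=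
        ih₂ (Finset.subset_sdiff.2 ⟨hLS, hu⟩) (Finset.sdiff_subset.trans hS)
      obtain ⟨a₁, b₁, ha₁, hb₁, e₁⟩ := h₁.restrict H L hd
      rw [Finset.inter_right_comm] at ha₁ hb₁
      rw [Finset.sdiff_inter_right_comm] at ha₂ hb₂ e₂
      refine ⟨_, _, .split _ u _ _ _ ha₁ ha₂ le_rfl, skip hb₁ hb₂ ?_, ?_⟩
      · exact Or.inr (by rwa [hSL])
      · have := T.wsum_mono w (A := (S ∩ H) ∩ T.subtree u) (B := H ∩ T.subtree u)
          (Finset.inter_subset_inter Finset.inter_subset_right le_rfl)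
        omega

end Strategy

/-! ### The greedy choice -/

/-- `x` is a node of `V` that splits `V` as evenly as possible. -/
def IsGreedyChoice (T : RTree) (w : Fin T.n → ℕ) (V : Finset (Fin T.n)) (x : Fin T.n) : Prop :=
  x ∈ V ∧ ∀ y ∈ V,
    |(T.wsum w (V ∩ T.subtree x) : ℤ) - (T.wsum w (V \ T.subtree x) : ℤ)| ≤
    |(T.wsum w (V ∩ T.subtree y) : ℤ) - (T.wsum w (V \ T.subtree y) : ℤ)|

namespace IsGreedyChoice

variable {T : RTree} {w : Fin T.n → ℕ} {V : Finset (Fin T.n)} {x : Fin T.n}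

/-- With positive weights a greedy choice splits `V` properly: of two distinct nodes of `V`, one
is not an ancestor of the other, so a proper split exists, and it is more even than a trivial
one. -/
lemma sdiff_nonempty (hw : ∀ v, 0 < w v) (hx : IsGreedyChoice T w V x) (hcard : 2 ≤ V.card) :
    (V \ T.subtree x).Nonempty := by
  obtain ⟨a, ha, b, hb, hab⟩ : ∃ a ∈ V, ∃ b ∈ V, ¬ T.anc a b := by
    obtain ⟨a, ha, b, hb, hab⟩ := Finset.one_lt_card.1 (show 1 < V.card by omega)
    by_cases h : T.anc a b
    · exact ⟨b, hb, a, ha, fun h' => hab (T.anc_antisymm h h')⟩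
    · exact ⟨a, ha, b, hb, h⟩
  by_contra hne
  rw [Finset.not_nonempty_iff_eq_empty] at hne
  have h0 : T.wsum w (V \ T.subtree x) = 0 := by simp [hne, RTree.wsum]
  have h1 := hx.2 a ha
  have h2 := T.wsum_pos hw (A := V ∩ T.subtree a) ⟨a, by simp [ha, T.anc_refl]⟩
  have h3 := T.wsum_pos hw (A := V \ T.subtree a) ⟨b, by simp [hb, hab]⟩
  have h4 := T.wsum_inter_add_sdiff w V (T.subtree a)
  have h5 := T.wsum_inter_add_sdiff w V (T.subtree x)
  rw [le_abs, abs_le, abs_le] at h1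
  omega

/-- The cut condition of `Strategy.split_savings`, applied with `H` the heavier and `L` the
lighter part of a greedy split. The hypothesis `hconst` expresses laminarity. -/
lemma cut (hw : ∀ v, 0 < w v) (hV : T.Conn V) {H L : Finset (Fin T.n)} (hd : Disjoint H L)
    (hHL : H ∪ L = V)
    (hmin : ∀ y ∈ V, (T.wsum w H : ℤ) - T.wsum w L ≤
      |(T.wsum w (V ∩ T.subtree y) : ℤ) - (T.wsum w (V \ T.subtree y) : ℤ)|)
    (u : Fin T.n)
    (hconst : (H ⊆ T.subtree u ∨ Disjoint H (T.subtree u)) ∨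
      (L ⊆ T.subtree u ∨ Disjoint L (T.subtree u))) :
    (H ⊆ T.subtree u ∨ Disjoint H (T.subtree u)) ∨
      (L ⊆ T.subtree u ∧ T.wsum w (H \ T.subtree u) ≤ T.wsum w L) ∨
      (Disjoint L (T.subtree u) ∧ T.wsum w (H ∩ T.subtree u) ≤ T.wsum w L) := by
  by_cases hH : H ⊆ T.subtree u ∨ Disjoint H (T.subtree u)
  · exact Or.inl hH
  right
  have hL := hconst.resolve_left hH
  rw [not_or, Finset.not_subset, Finset.not_disjoint_iff] at hH
  obtain ⟨⟨b, hb, hub⟩, a, ha, hua⟩ := hH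
  have hHV : H ⊆ V := hHL ▸ Finset.subset_union_left
  have huV : u ∈ V := hV u a (hHV ha) b (hHV hb) (T.mem_subtree.1 hua)
    (fun h => hub (T.mem_subtree.2 h))
  have h1 := hmin u huV
  have h2 := T.wsum_inter_add_sdiff w V (T.subtree u)
  have h3 : T.wsum w V = T.wsum w H + T.wsum w L := by rw [← hHL, T.wsum_union w hd]
  have h4 := T.wsum_inter_add_sdiff w H (T.subtree u)
  have h5 := T.wsum_pos hw (A := H ∩ T.subtree u) ⟨a, Finset.mem_inter.2 ⟨ha, hua⟩⟩
  have h6 := T.wsum_pos hw (A := H \ T.subtree u) ⟨b, Finset.mem_sdiff.2 ⟨hb, hub⟩⟩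
  rw [le_abs] at h1
  rcases hL with hL | hL
  · have h7 : V \ T.subtree u = H \ T.subtree u := by
      rw [← hHL, Finset.union_sdiff_distrib, Finset.sdiff_eq_empty_iff_subset.2 hL,
        Finset.union_empty]
    rw [h7] at h1 h2
    exact Or.inl ⟨hL, by omega⟩
  · have h7 : V ∩ T.subtree u = H ∩ T.subtree u := by
      rw [← hHL, Finset.union_inter_distrib_right, Finset.disjoint_iff_inter_eq_empty.1 hL,
        Finset.union_empty]
    rw [h7] at h1 h2
    exact Or.inr ⟨hL, by omega⟩

/-- Splitting `V` at a greedy choice saves at least half of the weight of `V`. -/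
lemma savings (hw : ∀ v, 0 < w v) (hV : T.Conn V) (hcard : 2 ≤ V.card)
    (hx : IsGreedyChoice T w V x) {c : ℕ} (h : Strategy T w V c) :
    ∃ c₁ c₂, Strategy T w (V ∩ T.subtree x) c₁ ∧ Strategy T w (V \ T.subtree x) c₂ ∧
      T.wsum w V + 2 * c₁ + 2 * c₂ ≤ 2 * c := by
  have hxR : (V ∩ T.subtree x).Nonempty := ⟨x, by simp [hx.1, T.anc_refl]⟩
  have hxL := hx.sdiff_nonempty hw hcard
  have hd : Disjoint (V ∩ T.subtree x) (V \ T.subtree x) :=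
    Finset.disjoint_sdiff.mono_left Finset.inter_subset_right
  have hun : V ∩ T.subtree x ∪ V \ T.subtree x = V := by
    rw [Finset.union_comm]; exact Finset.sdiff_union_inter V _
  have hsum := T.wsum_inter_add_sdiff w V (T.subtree x)
  have hlam : ∀ u, (V ∩ T.subtree x ⊆ T.subtree u ∨ Disjoint (V ∩ T.subtree x) (T.subtree u)) ∨
      (V \ T.subtree x ⊆ T.subtree u ∨ Disjoint (V \ T.subtree x) (T.subtree u)) := by
    intro u
    by_cases h1 : T.anc u x
    · exact Or.inl (Or.inl fun v hv => by
        simp only [Finset.mem_inter, RTree.mem_subtree] at *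
        exact T.anc_trans h1 hv.2)
    by_cases h2 : T.anc x u
    · refine Or.inr (Or.inr (Finset.disjoint_left.2 fun v hv hv' => ?_))
      simp only [Finset.mem_sdiff, RTree.mem_subtree] at *
      exact hv.2 (T.anc_trans h2 hv')
    · refine Or.inl (Or.inr (Finset.disjoint_left.2 fun v hv hv' => ?_))
      simp only [Finset.mem_inter, RTree.mem_subtree] at *
      exact (T.anc_total hv' hv.2).elim h1 h2
  rcases le_total (T.wsum w (V \ T.subtree x)) (T.wsum w (V ∩ T.subtree x)) with hle | hle
  · obtain ⟨c₁, c₂, h₁, h₂, e⟩ := h.split_savings hd hxL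
      (fun u => cut hw hV hd hun (fun y hy => (le_abs_self _).trans (hx.2 y hy)) u (hlam u))
      Finset.sdiff_subset hun.ge
    rw [← Finset.inter_assoc, Finset.inter_self] at h₁ e
    rw [Finset.inter_eq_right.2 Finset.sdiff_subset] at h₂
    exact ⟨c₁, c₂, h₁, h₂, by omega⟩
  · rw [Finset.union_comm] at hun
    obtain ⟨c₁, c₂, h₁, h₂, e⟩ := h.split_savings hd.symm hxR
      (fun u => cut hw hV hd.symm hun
        (fun y hy => (by rw [abs_sub_comm]; exact le_abs_self _ :
          _ ≤ |(T.wsum w (V ∩ T.subtree x) : ℤ) - (T.wsum w (V \ T.subtree x) : ℤ)|).trans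
          (hx.2 y hy)) u (hlam u).symm)
      Finset.inter_subset_left hun.ge
    rw [Finset.inter_eq_right.2 Finset.sdiff_subset] at h₁ e
    rw [← Finset.inter_assoc, Finset.inter_self] at h₂
    exact ⟨c₂, c₁, h₂, h₁, by omega⟩

end IsGreedyChoice

/-! ### Costs of binary trees -/

namespace BT

variable {α : Type}

lemma leafList_node {a : α} {l r : BT α} (h : l ≠ nil ∨ r ≠ nil) :
    (node a l r).leafList = l.leafList ++ r.leafList := by
  cases l <;> cases r <;> simp_all [leafList]

lemma leafDepths_node {a : α} {l r : BT α} (h : l ≠ nil ∨ r ≠ nil) :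
    (node a l r).leafDepths = (l.leafDepths ++ r.leafDepths).map (fun p => (p.1, p.2 + 1)) := by
  cases l <;> cases r <;> simp_all [leafDepths]

lemma leafDepths_map_fst (D : BT α) : D.leafDepths.map Prod.fst = D.leafList := by
  induction D with
  | nil => rfl
  | node a l r ihl ihr =>
    by_cases h : l ≠ nil ∨ r ≠ nil
    · rw [leafDepths_node h, leafList_node h, List.map_map, ← ihl, ← ihr, ← List.map_append]
      rfl
    · push Not at h
      obtain ⟨rfl, rfl⟩ := h
      rfl

/-- Increasing all depths by one raises the cost by the total leaf weight. -/
lemma sum_depth_succ (w : α → ℕ) (L : List (α × ℕ)) :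
    ((L.map (fun p => (p.1, p.2 + 1))).map (fun p => p.2 * w p.1)).sum =
      (L.map (fun p => p.2 * w p.1)).sum + ((L.map Prod.fst).map w).sum := by
  induction L with
  | nil => rfl
  | cons p L ih =>
    simp only [List.map_cons, List.sum_cons, ih]
    ring

lemma cost_node (w : α → ℕ) {a : α} {l r : BT α} (h : l ≠ nil ∨ r ≠ nil) :
    (node a l r).cost w = l.cost w + r.cost w + (l.leafWeight w + r.leafWeight w) := by
  unfold cost leafWeight
  rw [leafDepths_node h, sum_depth_succ, List.map_append, List.map_append, leafDepths_map_fst,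
    leafDepths_map_fst]
  simp [List.sum_append]

lemma leafWeight_node (w : α → ℕ) {a : α} {l r : BT α} (h : l ≠ nil ∨ r ≠ nil) :
    (node a l r).leafWeight w = l.leafWeight w + r.leafWeight w := by
  unfold leafWeight
  rw [leafList_node h]
  simp

lemma leafList_subset_vals (D : BT α) : D.leafList ⊆ D.vals := by
  induction D with
  | nil => simp [leafList]
  | node a l r ihl ihr =>
    by_cases h : l ≠ nil ∨ r ≠ nil
    · rw [leafList_node h, vals]
      intro b hb
      rcases List.mem_append.1 hb with hb | hb
      · simp [ihl hb]
      · simp [ihr hb]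
    · push Not at h
      obtain ⟨rfl, rfl⟩ := h
      simp [leafList, vals]

end BT

/-- A search tree yields a strategy for the set of its leaf labels, of no larger cost. -/
lemma BT.SearchProp.strategy {T : RTree} (w : Fin T.n → ℕ) {D : BT (Fin T.n)}
    (h : BT.SearchProp T.anc D) (hnd : D.leafList.Nodup) :
    Strategy T w D.leafList.toFinset (D.cost w) := by
  induction D with
  | nil => exact .base _ _ (by simp [leafList])
  | node a l r ihl ihr =>
    by_cases hlr : l ≠ nil ∨ r ≠ nil
    · obtain ⟨hr, hl, hsl, hsr⟩ := h
      have hwS : T.wsum w (node a l r).leafList.toFinset = (node a l r).leafWeight w := by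
        unfold RTree.wsum leafWeight
        exact List.sum_toFinset w hnd
      rw [leafList_node hlr] at hnd hwS ⊢
      rw [List.nodup_append'] at hnd
      have hl' : ∀ b ∈ l.leafList, ¬ T.anc a b := fun b hb => hl b (leafList_subset_vals l hb)
      have hr' : ∀ b ∈ r.leafList, T.anc a b := fun b hb => hr b (leafList_subset_vals r hb)
      have e₁ : (l.leafList ++ r.leafList).toFinset ∩ T.subtree a = r.leafList.toFinset := by
        ext b
        have := hl' b
        have := hr' b
        simp only [Finset.mem_inter, List.mem_toFinset, List.mem_append, RTree.mem_subtree]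
        tauto
      have e₂ : (l.leafList ++ r.leafList).toFinset \ T.subtree a = l.leafList.toFinset := by
        ext b
        have := hl' b
        have := hr' b
        simp only [Finset.mem_sdiff, List.mem_toFinset, List.mem_append, RTree.mem_subtree]
        tauto
      refine .split _ a (r.cost w) (l.cost w) _ ?_ ?_ ?_
      · rw [e₁]; exact ihr hsr hnd.2.1
      · rw [e₂]; exact ihl hsl hnd.1
      · rw [hwS, cost_node w hlr, leafWeight_node w hlr]
        omega
    · push Not at hlr
      obtain ⟨rfl, rfl⟩ := hlr
      exact .base _ _ (by simp [leafList])

/-! ### The greedy search tree -/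

/-- Existence of a greedy search tree on a connected set, together with its comparison to all
strategies for that set. -/
lemma exists_greedy (T : RTree) (w : Fin T.n → ℕ) (hw : ∀ v, 0 < w v) (V : Finset (Fin T.n))
    (hV : T.Conn V) (hne : V.Nonempty) :
    ∃ D : BT (Fin T.n), D ≠ BT.nil ∧ IsGreedy T w V D ∧ T.IsSearchTreeOn V D ∧
      D.leafWeight w = T.wsum w V ∧ ∀ c, Strategy T w V c → D.cost w ≤ 2 * c := by
  induction V using Finset.strongInduction with
  | H V ih =>
    rcases Nat.lt_or_ge V.card 2 with hc | hc
    · obtain ⟨x, rfl⟩ := Finset.card_eq_one.1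
        (show V.card = 1 by have := hne.card_pos; omega)
      refine ⟨BT.node x BT.nil BT.nil, by simp, .leaf x, ⟨?_, ?_, ?_⟩, ?_, ?_⟩
      · intro v
        by_cases h : v = x
        · simp [BT.leafList, h]
        · simp [BT.leafList, h, Ne.symm h]
      · simp [BT.vals]
      · simp [BT.SearchProp, BT.vals]
      · simp [BT.leafWeight, BT.leafList, RTree.wsum]
      · intro c _
        simp [BT.cost, BT.leafDepths]
    · obtain ⟨x, hxV, hx⟩ := Finset.exists_min_image V
        (fun y => |(T.wsum w (V ∩ T.subtree y) : ℤ) - (T.wsum w (V \ T.subtree y) : ℤ)|) hne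
      have hg : IsGreedyChoice T w V x := ⟨hxV, hx⟩
      have hxR : (V ∩ T.subtree x).Nonempty := ⟨x, by simp [hxV, T.anc_refl]⟩
      have hxL := hg.sdiff_nonempty hw hc
      obtain ⟨b, hb⟩ := hxL
      have hbV := (Finset.mem_sdiff.1 hb).1
      have hbx := (Finset.mem_sdiff.1 hb).2
      have hR : V ∩ T.subtree x ⊂ V := Finset.ssubset_iff_subset_ne.2
        ⟨Finset.inter_subset_left, fun h => hbx (Finset.mem_inter.1 (h.symm ▸ hbV)).2⟩
      have hL : V \ T.subtree x ⊂ V := Finset.ssubset_iff_subset_ne.2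
        ⟨Finset.sdiff_subset, fun h => (Finset.mem_sdiff.1 (h.symm ▸ hxV)).2
          (T.mem_subtree.2 (T.anc_refl x))⟩
      obtain ⟨r, hr0, hrg, ⟨hrc, hrv, hrs⟩, hrw, hrcost⟩ := ih _ hR (hV.inter x) hxR
      obtain ⟨l, hl0, hlg, ⟨hlc, hlv, hls⟩, hlw, hlcost⟩ := ih _ hL (hV.sdiff x) ⟨b, hb⟩
      have hsum := T.wsum_inter_add_sdiff w V (T.subtree x)
      refine ⟨BT.node x l r, by simp, .node V x l r hxV hc hx hrg hlg, ⟨?_, ?_, ?_⟩, ?_, ?_⟩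
      · intro v
        rw [BT.leafList_node (Or.inl hl0), List.count_append, hlc, hrc]
        by_cases h1 : v ∈ V <;> by_cases h2 : T.anc x v <;> simp [h1, h2]
      · intro a ha
        simp only [BT.vals, List.mem_cons, List.mem_append] at ha
        rcases ha with rfl | ha | ha
        · exact hxV
        · exact Finset.sdiff_subset (hlv a ha)
        · exact Finset.inter_subset_left (hrv a ha)
      · exact ⟨fun a ha => T.mem_subtree.1 (Finset.mem_inter.1 (hrv a ha)).2,
          fun a ha h => (Finset.mem_sdiff.1 (hlv a ha)).2 (T.mem_subtree.2 h), hls, hrs⟩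
      · rw [BT.leafWeight_node w (Or.inl hl0), hlw, hrw]
        omega
      · intro c hcs
        obtain ⟨c₁, c₂, h₁, h₂, e⟩ := hg.savings hw hV hc hcs
        have := hrcost _ h₁
        have := hlcost _ h₂
        rw [BT.cost_node w (Or.inl hl0), hlw, hrw]
        omega

/-- For every tree `T` with positive integer node weights there is a choice of minimizers for
the greedy algorithm such that the resulting greedy search tree `D` satisfies
`cost(D) ≤ 2·cost(D*)` for every search tree `D*` for `T`: the greedy strategy is a
2-approximation for the tree search problem. -/
theorem statement2 (T : RTree) (w : Fin T.n → ℕ) (hw : ∀ v, 0 < w v) :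
    ∃ D : BT (Fin T.n), IsGreedy T w Finset.univ D ∧ T.IsSearchTree D ∧
      ∀ Dstar : BT (Fin T.n), T.IsSearchTree Dstar →
        BT.cost w D ≤ 2 * BT.cost w Dstar := by
  obtain ⟨D, -, hg, ⟨hc, -, hs⟩, -, hcost⟩ := exists_greedy T w hw Finset.univ
    (fun u _ _ _ _ _ _ => Finset.mem_univ u) ⟨T.root, Finset.mem_univ _⟩
  refine ⟨D, hg, ⟨fun v => by simpa using hc v, hs⟩, fun Dstar hD => hcost _ ?_⟩
  have hnd : Dstar.leafList.Nodup := List.nodup_iff_count_le_one.2 fun v => (hD.1 v).le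
  have hall : Dstar.leafList.toFinset = Finset.univ := by
    ext v
    have : 0 < Dstar.leafList.count v := by rw [hD.1 v]; exact one_pos
    simpa using List.count_pos_iff.1 this
  rw [← hall]
  exact hD.2.strategy w hnd
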